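/- Let μ be a finite signed Borel measure on [-1,0] with |μ|([-1,0]) ≥ 1. Then for every ε > 0 there exists a Borel-measurable function φ : [-1,0] → [-1,0] with sup_{θ∈[-1,0]} |φ(θ) − θ| < ε such that the pushforward measure φ_*μ is purely atomic, supported on finitely many points −τ_0, …, −τ_r with τ_0, …, τ_r rationally independent, and Σ_j |(φ_*μ)({−τ_j})| ≥ 1. -/

import Mathlib

/-!
Cut a totally bounded set into finitely many small cells and split each of them along a Hahn
decomposition of `μ`. Every piece then has constant sign, so the moduli of the masses of the pieces
add up to the total variation of `μ`. Now collapse each piece to a point nearby: pieces sent to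
distinct points cannot cancel, and since the `ℚ`-span of finitely many vectors is countable while
every nonempty open set is uncountable, the points can be chosen one after the other to be
rationally independent.
-/

open MeasureTheory

/-- Real numbers `τ_0, …, τ_r` are rationally independent if no nontrivial rational linear
combination of them vanishes. -/
def RatIndep {r : ℕ} (τ : Fin (r + 1) → ℝ) : Prop :=
  ∀ q : Fin (r + 1) → ℚ, (∑ j, (q j : ℝ) * τ j) = 0 → ∀ j, q j = 0

lemma ratIndep_iff_linearIndependent {r : ℕ} {τ : Fin (r + 1) → ℝ} :
    RatIndep τ ↔ LinearIndependent ℚ τ := by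
  simp only [RatIndep, Fintype.linearIndependent_iff, Rat.smul_def]

section LinearIndependent

lemma exists_linearIndependent_mem_of_not_countable {K V ι : Type*} [DivisionRing K] [Countable K]
    [AddCommGroup V] [Module K V] [Finite ι] (S : ι → Set V) (hS : ∀ i, ¬ (S i).Countable) :
    ∃ v : ι → V, LinearIndependent K v ∧ ∀ i, v i ∈ S i := by
  induction ι using Finite.induction_empty_option with
  | of_equiv e ih =>
    obtain ⟨v, hv, hvS⟩ := ih (S ∘ e) fun i => hS (e i)
    exact ⟨v ∘ e.symm, hv.comp _ e.symm.injective, fun i => by simpa using hvS (e.symm i)⟩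
  | h_empty => exact ⟨PEmpty.elim, linearIndependent_empty_type, fun i => i.elim⟩
  | h_option ih =>
    obtain ⟨v, hv, hvS⟩ := ih (fun i => S (some i)) fun i => hS (some i)
    have span_countable : (Submodule.span K (Set.range v) : Set V).Countable :=
      Set.countable_coe_iff.mp (inferInstance : Countable (Submodule.span K (Set.range v)))
    obtain ⟨x, hxS, hx⟩ : ∃ x ∈ S none, x ∉ Submodule.span K (Set.range v) :=
      Set.not_subset.mp fun h => hS none (span_countable.mono h)
    refine ⟨(Option.casesOn' · x v), linearIndependent_option'.mpr ⟨hv, hx⟩, ?_⟩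
    rintro (_ | i)
    exacts [hxS, hvS i]

lemma not_countable_of_isOpen (𝕜 : Type*) {E : Type*} [NontriviallyNormedField 𝕜]
    [CompleteSpace 𝕜] [AddCommGroup E] [Module 𝕜 E] [Nontrivial E] [TopologicalSpace E]
    [ContinuousAdd E] [ContinuousSMul 𝕜 E] {U : Set E} (hU : IsOpen U) (hne : U.Nonempty) :
    ¬ U.Countable := fun hc => by
  obtain ⟨x, hx, hx'⟩ := (hc.dense_compl 𝕜).inter_open_nonempty U hU hne
  exact hx' hx

end LinearIndependent

section ConstantSign

variable {α β ι : Type*} [MeasurableSpace α] [MeasurableSpace β] [MeasurableSpace ι]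
  {μ : SignedMeasure α} {A B : Set α}

/-- The signed measure `μ` has constant sign on `A`: in the language of the Hahn decomposition,
`A` is a positive or a negative set for `μ`. On such a set no cancellation occurs, so that
`|μ|(A) = |μ(A)|`. -/
def ConstantSignOn (μ : SignedMeasure α) (A : Set α) : Prop :=
  0 ≤[A] μ ∨ μ ≤[A] 0

lemma ConstantSignOn.mono (hB : ConstantSignOn μ B) (hBm : MeasurableSet B) (hAB : A ⊆ B) :
    ConstantSignOn μ A :=
  hB.imp (VectorMeasure.restrict_le_restrict_subset _ _ hBm · hAB)
    (VectorMeasure.restrict_le_restrict_subset _ _ hBm · hAB)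

lemma exists_measurable_bool_constantSignOn (μ : SignedMeasure α) :
    ∃ s : α → Bool, Measurable s ∧ ∀ b, ConstantSignOn μ (s ⁻¹' {b}) := by
  classical
  obtain ⟨P, hP, hpos, hneg⟩ := μ.exists_compl_positive_negative
  refine ⟨fun x => decide (x ∈ P), measurable_to_bool (by simpa [Set.preimage] using hP), ?_⟩
  rintro (_ | _)
  · exact .inr (by simpa [Set.preimage, Set.compl_def] using hneg)
  · exact .inl (by simpa [Set.preimage] using hpos)

lemma totalVariation_real_of_zero_le_restrict (hA : MeasurableSet A) (hpos : 0 ≤[A] μ) :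
    μ.totalVariation.real A = μ A := by
  have nonneg {E : Set α} (hEA : E ⊆ A) : 0 ≤ μ E :=
    VectorMeasure.subset_le_of_restrict_le_restrict _ _ hA hpos hEA
  refine le_antisymm ?_ ((le_abs_self _).trans (μ.norm_le_totalVariation A))
  have le_toMeasure : μ.variation A ≤ μ.toMeasureOfZeroLE A hA hpos A := by
    refine VectorMeasure.variation_apply_le_of_forall_enorm_le hA fun E hE hEA => ?_
    rw [Real.enorm_of_nonneg (nonneg hEA), ← ofReal_measureReal,
      μ.toMeasureOfZeroLE_real_apply hpos hA hE, Set.inter_eq_right.mpr hEA]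
  have le_toMeasure_real := ENNReal.toReal_mono (measure_ne_top _ _) le_toMeasure
  rwa [← SignedMeasure.totalVariation_eq_variation, ← measureReal_def, ← measureReal_def,
    μ.toMeasureOfZeroLE_real_apply hpos hA hA, Set.inter_self] at le_toMeasure_real

lemma ConstantSignOn.totalVariation_real (h : ConstantSignOn μ A) (hA : MeasurableSet A) :
    μ.totalVariation.real A = |μ A| := by
  rcases h with hpos | hneg
  · rw [abs_of_nonneg (μ.nonneg_of_zero_le_restrict hpos),
      totalVariation_real_of_zero_le_restrict hA hpos]
  · have hpos : 0 ≤[A] -μ := by simpa using VectorMeasure.neg_le_neg _ _ hA hneg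
    rw [abs_of_nonpos (μ.nonpos_of_restrict_le_zero hneg), ← μ.totalVariation_neg,
      totalVariation_real_of_zero_le_restrict hA hpos, neg_apply]

lemma sum_abs_preimage_singleton [Fintype ι] [MeasurableSingletonClass ι] {g : α → ι}
    (hg : Measurable g) (hsign : ∀ j, ConstantSignOn μ (g ⁻¹' {j})) :
    ∑ j, |μ (g ⁻¹' {j})| = μ.totalVariation.real Set.univ := by
  have hfib (j : ι) : MeasurableSet (g ⁻¹' {j}) := hg (measurableSet_singleton j)
  calc ∑ j, |μ (g ⁻¹' {j})|
      = ∑ j, μ.totalVariation.real (g ⁻¹' {j}) := by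
        simp only [(hsign _).totalVariation_real (hfib _)]
    _ = μ.totalVariation.real Set.univ := by
        simpa using sum_measureReal_preimage_singleton Finset.univ fun j _ => hfib j

lemma sum_abs_map_comp_singleton [Fintype ι] [DiscreteMeasurableSpace ι]
    [MeasurableSingletonClass β] {g : α → ι} {p : ι → β} (hg : Measurable g)
    (hp : Function.Injective p) (hsign : ∀ j, ConstantSignOn μ (g ⁻¹' {j})) :
    ∑ j, |μ.map (p ∘ g) {p j}| = μ.totalVariation.real Set.univ := by
  rw [← sum_abs_preimage_singleton hg hsign]
  refine Finset.sum_congr rfl fun j _ => ?_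
  rw [VectorMeasure.map_apply _ (Measurable.of_discrete.comp hg) (measurableSet_singleton _),
    Set.preimage_comp, ← Set.image_singleton, hp.preimage_image]

lemma totalVariation_map_compl_eq_zero {φ : α → β} (hφ : Measurable φ) {S : Set β}
    (hS : MeasurableSet S) (hφS : ∀ x, φ x ∈ S) :
    SignedMeasure.totalVariation (μ.map φ) Sᶜ = 0 := by
  have preimage_empty : φ ⁻¹' Sᶜ = ∅ := Set.eq_empty_of_forall_notMem fun x hx => hx (hφS x)
  rw [SignedMeasure.totalVariation_eq_variation, ← nonpos_iff_eq_zero]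
  calc (μ.map φ).variation Sᶜ
      ≤ μ.variation.map φ Sᶜ := VectorMeasure.variation_map_le _
    _ = 0 := by rw [Measure.map_apply hφ hS.compl, preimage_empty, measure_empty]

end ConstantSign

section Cells

lemma exists_measurable_forall_mem_iUnion {α ι : Type*} [MeasurableSpace α] [MeasurableSpace ι]
    [Countable ι] [Nonempty ι] {B : ι → Set α} (hB : ∀ i, MeasurableSet (B i)) :
    ∃ g : α → ι, Measurable g ∧ ∀ x ∈ ⋃ i, B i, x ∈ B (g x) := by
  classical
  obtain ⟨e, he⟩ := exists_surjective_nat ι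
  have hex (x : α) : ∃ n, x ∈ B (e n) ∪ (⋃ i, B i)ᶜ := by
    by_cases hx : x ∈ ⋃ i, B i
    · obtain ⟨i, hi⟩ := Set.mem_iUnion.mp hx
      obtain ⟨n, rfl⟩ := he i
      exact ⟨n, .inl hi⟩
    · exact ⟨0, .inr hx⟩
  refine ⟨fun x => e (Nat.find (hex x)), measurable_from_nat.comp (measurable_find hex fun n =>
    (hB (e n)).union (MeasurableSet.iUnion hB).compl), fun x hx => ?_⟩
  exact (Nat.find_spec (hex x)).resolve_right fun h => h hx

lemma exists_measurable_fin_dist_lt_constantSignOn {X : Type*} [MetricSpace X] [MeasurableSpace X]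
    [OpensMeasurableSpace X] (μ : SignedMeasure X) {K : Set X} (hK : TotallyBounded K)
    (hne : K.Nonempty) {ε : ℝ} (hε : 0 < ε) :
    ∃ (r : ℕ) (g : X → Fin (r + 1)) (c : Fin (r + 1) → X), Measurable g ∧ (∀ j, c j ∈ K) ∧
      (∀ x ∈ K, dist x (c (g x)) < ε) ∧ ∀ j, ConstantSignOn μ (g ⁻¹' {j}) := by
  obtain ⟨t, htK, ht, hcover⟩ := Metric.finite_approx_of_totallyBounded hK ε hε
  rw [Set.biUnion_eq_iUnion] at hcover
  have : Finite t := ht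
  obtain ⟨y, -⟩ := Set.mem_iUnion.mp (hcover hne.some_mem)
  have : Nonempty t := ⟨y⟩
  obtain ⟨cell, hcell, hmem⟩ := exists_measurable_forall_mem_iUnion fun y : t =>
    measurableSet_ball (x := y.1) (ε := ε)
  obtain ⟨s, hs, hsign⟩ := exists_measurable_bool_constantSignOn μ
  obtain ⟨_ | r, ⟨e⟩⟩ := Finite.exists_equiv_fin (t × Bool)
  · exact (e (y, true)).elim0
  refine ⟨r, fun x => e (cell x, s x), fun j => (e.symm j).1,
    Measurable.of_discrete.comp (hcell.prodMk hs), fun j => htK (e.symm j).1.2,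
    fun x hx => by simpa using hmem x (hcover hx), fun j => ?_⟩
  refine (hsign (e.symm j).2).mono (hs (measurableSet_singleton _)) ?_
  rintro x rfl
  simp

end Cells

theorem stmt7_general {E : Type*} [NormedAddCommGroup E] [NormedSpace ℝ E] [Module ℚ E]
    [Nontrivial E] [MeasurableSpace E] [OpensMeasurableSpace E] (μ : SignedMeasure E)
    {K : Set E} (hK : TotallyBounded K) (hne : K.Nonempty) (hKint : K ⊆ closure (interior K))
    {ε : ℝ} (hε : 0 < ε) :
    ∃ φ : E → E, Measurable φ ∧ (∀ x, φ x ∈ K) ∧ (∀ x ∈ K, dist (φ x) x < ε) ∧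
      ∃ (r : ℕ) (p : Fin (r + 1) → E), LinearIndependent ℚ p ∧ (∀ j, p j ∈ K) ∧
        SignedMeasure.totalVariation (μ.map φ) (Set.range p)ᶜ = 0 ∧
        ∑ j, |μ.map φ {p j}| = μ.totalVariation.real Set.univ := by
  obtain ⟨r, g, c, hg, hcK, hdist, hsign⟩ :=
    exists_measurable_fin_dist_lt_constantSignOn μ hK hne (half_pos hε)
  have uncountable_near (j : Fin (r + 1)) :
      ¬ (interior K ∩ Metric.ball (c j) (ε / 2)).Countable := by
    refine not_countable_of_isOpen ℝ (isOpen_interior.inter Metric.isOpen_ball) ?_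
    obtain ⟨y, hy, hyc⟩ := Metric.mem_closure_iff.mp (hKint (hcK j)) (ε / 2) (half_pos hε)
    exact ⟨y, hy, by rwa [Metric.mem_ball']⟩
  obtain ⟨p, hp, hpmem⟩ :=
    exists_linearIndependent_mem_of_not_countable (K := ℚ) _ uncountable_near
  have hpK (j : Fin (r + 1)) : p j ∈ K := interior_subset (hpmem j).1
  have hφ : Measurable (p ∘ g) := Measurable.of_discrete.comp hg
  refine ⟨p ∘ g, hφ, fun x => hpK _, fun x hx => ?_, r, p, hp, hpK,
    totalVariation_map_compl_eq_zero hφ (Set.finite_range p).measurableSet fun x => ⟨g x, rfl⟩,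
    sum_abs_map_comp_singleton hg hp.injective hsign⟩
  calc dist (p (g x)) x
      ≤ dist (p (g x)) (c (g x)) + dist x (c (g x)) := dist_triangle_right _ _ _
    _ < ε / 2 + ε / 2 := add_lt_add (hpmem (g x)).2 (hdist x hx)
    _ = ε := add_halves ε

/-- if `μ` is a finite signed Borel measure supported on `[-1,0]` with
`|μ|([-1,0]) ≥ 1`, then for every `ε > 0` there is a Borel-measurable
`φ : [-1,0] → [-1,0]` with `sup |φ − id| < ε` such that `φ_*μ` is purely atomic, supported
on finitely many points `−τ_0, …, −τ_r` with `τ_0, …, τ_r` rationally independent, and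
`Σ_j |(φ_*μ)({−τ_j})| ≥ 1`. -/
theorem stmt7 (μ : SignedMeasure ℝ)
    (hsupp : μ.totalVariation (Set.Icc (-1:ℝ) 0)ᶜ = 0)
    (h1 : 1 ≤ μ.totalVariation (Set.Icc (-1:ℝ) 0)) :
    ∀ ε > (0:ℝ), ∃ φ : ℝ → ℝ, Measurable φ ∧
      Set.MapsTo φ (Set.Icc (-1) 0) (Set.Icc (-1) 0) ∧
      (∀ θ ∈ Set.Icc (-1:ℝ) 0, |φ θ - θ| < ε) ∧
      ∃ (r : ℕ) (τ : Fin (r + 1) → ℝ), RatIndep τ ∧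
        (∀ j, -τ j ∈ Set.Icc (-1:ℝ) 0) ∧
        (SignedMeasure.totalVariation (μ.map φ)) {x : ℝ | ∃ j, x = -τ j}ᶜ = 0 ∧
        1 ≤ ∑ j, |(μ.map φ) {-τ j}| := by
  intro ε hε
  obtain ⟨φ, hφ, hmem, hdist, r, p, hp, hpmem, hnull, hsum⟩ := stmt7_general μ
    isCompact_Icc.totallyBounded (Set.nonempty_Icc.mpr (by norm_num))
    (closure_interior_Icc (by norm_num : (-1 : ℝ) ≠ 0)).ge hε
  have one_le : (1 : ENNReal).toReal ≤ μ.totalVariation.real Set.univ :=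
    ENNReal.toReal_mono (measure_ne_top _ _) (h1.trans (measure_mono (Set.subset_univ _)))
  exact ⟨φ, hφ, fun θ _ => hmem θ, hdist, r, -p, ratIndep_iff_linearIndependent.mpr hp.neg,
    by simpa using hpmem, by simpa [Set.range, eq_comm] using hnull, by simpa [hsum] using one_le⟩
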